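/- arXiv:1102.5519 — 4 statements merged into one kernel-verified Lean document; each statement's English description precedes it below -/
import Mathlib

section
/- For all words σ, ω ∈ F_d^+ the kernel K is multi-Toeplitz: if σ = ωα for some word α then K(σ, ω) = K(α, 0); if ω = σα for some word α then K(σ, ω) = K(0, α); and if neither σ is of the form ωα nor ω is of the form σα for any word α, then K(σ, ω) = 0. -/
/-!
The operator `K(σ, ω)` is determined by the form `⟪y, K(σ, ω) u⟫ = ⟪V_σ j₀ y, V_ω i₀ u⟫`
(`inner_Kker`). Each `V_γ` is isometric and `V_{γα} = V_γ V_α`, so a common prefix `γ` of `σ` and `ω`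
cancels from this inner product; this gives the two Toeplitz identities. If neither word is a prefix
of the other, they part ways at some first letter: after cancelling the common prefix, the two
vectors lie in the ranges of `V_k` and `V_l` with `k ≠ l`, which are orthogonal
(`inner_Vword_eq_zero`).
-/

open scoped ComplexInnerProductSpace
open ContinuousLinearMap

noncomputable section

variable {d : ℕ} {hH U Y : Type*}
  [NormedAddCommGroup hH] [InnerProductSpace ℂ hH] [CompleteSpace hH]
  [NormedAddCommGroup U] [InnerProductSpace ℂ U] [CompleteSpace U]
  [NormedAddCommGroup Y] [InnerProductSpace ℂ Y] [CompleteSpace Y]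

/-- For a word `α = α₁…α_r` (a list of generators), `Vword V α = V_{α₁} ∘ ⋯ ∘ V_{α_r}`,
with `Vword V [] = 1`. -/
def Vword (V : Fin d → hH →L[ℂ] hH) : List (Fin d) → (hH →L[ℂ] hH)
  | [] => 1
  | k :: rest => V k ∘L Vword V rest

/-- `U₊`, the closed linear span of the subspaces `U_α = V_α(i₀(U))`, `α ∈ F_d⁺`. -/
def Uplus (V : Fin d → hH →L[ℂ] hH) (i0 : U →L[ℂ] hH) : Submodule ℂ hH :=
  (Submodule.span ℂ
    (⋃ α : List (Fin d), Set.range fun u : U => Vword V α (i0 u))).topologicalClosure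

/-- The kernel `K(σ, ω) = j_σ* ∘ i_ω` where `i_ω = V_ω ∘ i₀` and `j_σ = V_σ ∘ j₀`. -/
def Kker (V : Fin d → hH →L[ℂ] hH) (i0 : U →L[ℂ] hH) (j0 : Y →L[ℂ] hH)
    (σ ω : List (Fin d)) : U →L[ℂ] Y :=
  (ContinuousLinearMap.adjoint (Vword V σ ∘L j0)) ∘L (Vword V ω ∘L i0)

theorem Vword_append (V : Fin d → hH →L[ℂ] hH) (γ α : List (Fin d)) :
    Vword V (γ ++ α) = Vword V γ ∘L Vword V α := by
  induction γ with
  | nil => rfl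
  | cons k γ ih => simp only [List.cons_append, Vword, ih, ContinuousLinearMap.comp_assoc]

theorem inner_isometry (T : hH →L[ℂ] hH) (hT : ∀ x : hH, ‖T x‖ = ‖x‖) (x y : hH) :
    ⟪T x, T y⟫ = ⟪x, y⟫ :=
  (⟨T.toLinearMap, hT⟩ : hH →ₗᵢ[ℂ] hH).inner_map_map x y

theorem norm_Vword (V : Fin d → hH →L[ℂ] hH) (hVi : ∀ (k : Fin d) (x : hH), ‖V k x‖ = ‖x‖)
    (γ : List (Fin d)) (x : hH) : ‖Vword V γ x‖ = ‖x‖ := by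
  induction γ with
  | nil => rfl
  | cons k γ ih => exact (hVi k _).trans ih

theorem inner_Vword_eq_zero (V : Fin d → hH →L[ℂ] hH)
    (hVi : ∀ (k : Fin d) (x : hH), ‖V k x‖ = ‖x‖)
    (hVo : ∀ k l : Fin d, k ≠ l → ∀ x y : hH, ⟪V k x, V l y⟫ = 0)
    (σ ω : List (Fin d)) (h₁ : ∀ α, σ ≠ ω ++ α) (h₂ : ∀ α, ω ≠ σ ++ α) (x y : hH) :
    ⟪Vword V σ x, Vword V ω y⟫ = 0 := by
  induction σ generalizing ω with
  | nil => exact absurd rfl (h₂ ω)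
  | cons k σ ih =>
    cases ω with
    | nil => exact absurd rfl (h₁ (k :: σ))
    | cons l ω =>
      by_cases hkl : k = l
      · subst hkl
        refine (inner_isometry (V k) (hVi k) _ _).trans (ih ω ?_ ?_)
        · rintro α rfl
          exact h₁ α rfl
        · rintro α rfl
          exact h₂ α rfl
      · exact hVo k l hkl _ _

theorem inner_Kker (V : Fin d → hH →L[ℂ] hH) (i0 : U →L[ℂ] hH) (j0 : Y →L[ℂ] hH)
    (σ ω : List (Fin d)) (u : U) (y : Y) :
    ⟪y, Kker V i0 j0 σ ω u⟫ = ⟪Vword V σ (j0 y), Vword V ω (i0 u)⟫ :=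
  ContinuousLinearMap.adjoint_inner_right (Vword V σ ∘L j0) y (Vword V ω (i0 u))

/-- A common prefix `γ` cancels: `K(γα, γβ) = K(α, β)`. -/
theorem Kker_append_append (V : Fin d → hH →L[ℂ] hH)
    (hVi : ∀ (k : Fin d) (x : hH), ‖V k x‖ = ‖x‖) (i0 : U →L[ℂ] hH) (j0 : Y →L[ℂ] hH)
    (γ α β : List (Fin d)) : Kker V i0 j0 (γ ++ α) (γ ++ β) = Kker V i0 j0 α β := by
  ext u
  refine ext_inner_left ℂ fun y => ?_
  simp only [inner_Kker, Vword_append, ContinuousLinearMap.comp_apply]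
  exact inner_isometry _ (norm_Vword V hVi γ) _ _

/-- The kernel `K` is multi-Toeplitz: `K(ωα, ω) = K(α, 0)`,
`K(σ, σα) = K(0, α)`, and `K(σ, ω) = 0` if neither `σ = ωα` nor `ω = σα`. -/
theorem multiToeplitz_kernel
    (V : Fin d → hH →L[ℂ] hH)
    (hVi : ∀ (k : Fin d) (x : hH), ‖V k x‖ = ‖x‖)
    (hVo : ∀ k l : Fin d, k ≠ l → ∀ x y : hH, ⟪V k x, V l y⟫ = 0)
    (i0 : U →L[ℂ] hH) (hi0 : ∀ u : U, ‖i0 u‖ = ‖u‖)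
    (j0 : Y →L[ℂ] hH) (hj0 : ∀ y : Y, ‖j0 y‖ = ‖y‖) :
    (∀ ω α : List (Fin d), Kker V i0 j0 (ω ++ α) ω = Kker V i0 j0 α []) ∧
    (∀ σ α : List (Fin d), Kker V i0 j0 σ (σ ++ α) = Kker V i0 j0 [] α) ∧
    (∀ σ ω : List (Fin d), (∀ α : List (Fin d), σ ≠ ω ++ α) →
      (∀ α : List (Fin d), ω ≠ σ ++ α) → Kker V i0 j0 σ ω = 0) := by
  refine ⟨fun ω α => ?_, fun σ α => ?_, fun σ ω h₁ h₂ => ?_⟩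
  · simpa only [List.append_nil] using Kker_append_append V hVi i0 j0 ω α []
  · simpa only [List.append_nil] using Kker_append_append V hVi i0 j0 σ [] α
  · ext u
    refine ext_inner_left ℂ fun y => ?_
    rw [inner_Kker, inner_Vword_eq_zero V hVi hVo σ ω h₁ h₂, ContinuousLinearMap.zero_apply,
      inner_zero_right]
end
end

section
/- Suppose U_0 is a wandering subspace for the row isometry V. Then for every word α ∈ F_d^+ the coefficient K(α, 0) = j_0* V_α* i_0 : U → Y satisfies: K(0,0) = D; K(α, 0) = C ∘ B_{α_1} if α = α_1 has length 1; and K(α, 0) = C ∘ A_{α_r} ∘ ⋯ ∘ A_{α_2} ∘ B_{α_1} if α = α_1…α_r has length r ≥ 2. (Here B_{α_1} indeed maps U into H, and H is invariant under each V_k*, so all compositions are well defined.) -/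
/-!
`H = U₊ᗮ` is the set of vectors orthogonal to every generator `V_α (i₀ u)`. Since
`⟪V_α (i₀ u), V_k* h⟫ = ⟪V_{kα} (i₀ u), h⟫`, invariance of `H` under `V_k*` holds because `V_{kα} (i₀ u)`
is again a generator, and `V_k* (i₀ u') ∈ H` is the wandering property for the words `kα ≠ 0`.
The coefficient formulas come from `(V_{α₁} ⋯ V_{α_r})* = V_{α_r}* ⋯ V_{α₁}*`.
-/

open scoped ComplexInnerProductSpace
open ContinuousLinearMap

noncomputable section

variable {d : ℕ} {hH U Y : Type*}
  [NormedAddCommGroup hH] [InnerProductSpace ℂ hH] [CompleteSpace hH]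
  [NormedAddCommGroup U] [InnerProductSpace ℂ U] [CompleteSpace U]
  [NormedAddCommGroup Y] [InnerProductSpace ℂ Y] [CompleteSpace Y]

theorem mem_orthogonal_Uplus_iff (V : Fin d → hH →L[ℂ] hH) (i0 : U →L[ℂ] hH) (h : hH) :
    h ∈ (Uplus V i0)ᗮ ↔ ∀ (α : List (Fin d)) (u : U), ⟪Vword V α (i0 u), h⟫ = 0 := by
  rw [Uplus, Submodule.orthogonal_closure, Submodule.mem_orthogonal]
  constructor
  · intro H α u
    exact H _ (Submodule.subset_span (Set.mem_iUnion.2 ⟨α, u, rfl⟩))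
  · intro H x hx
    induction hx using Submodule.span_induction with
    | mem x hx =>
      obtain ⟨α, u, rfl⟩ := Set.mem_iUnion.1 hx
      exact H α u
    | zero => exact inner_zero_left _
    | add x y _ _ hx hy => rw [inner_add_left, hx, hy, add_zero]
    | smul a x _ hx => rw [inner_smul_left, hx, mul_zero]

/-- The adjoint of `V_α` applies the `V_l*` in the order in which the letters of `α` are read. -/
theorem adjoint_Vword_apply (V : Fin d → hH →L[ℂ] hH) (α : List (Fin d)) (x : hH) :
    ContinuousLinearMap.adjoint (Vword V α) x =
      α.foldl (fun x l => ContinuousLinearMap.adjoint (V l) x) x := by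
  induction α generalizing x with
  | nil =>
    refine ext_inner_left ℂ fun y => ?_
    rw [ContinuousLinearMap.adjoint_inner_right]
    rfl
  | cons k rest ih =>
    rw [Vword, ContinuousLinearMap.adjoint_comp, ContinuousLinearMap.comp_apply, ih, List.foldl_cons]

theorem Kker_nil_apply (V : Fin d → hH →L[ℂ] hH) (i0 : U →L[ℂ] hH) (j0 : Y →L[ℂ] hH)
    (α : List (Fin d)) (u : U) :
    Kker V i0 j0 α [] u = ContinuousLinearMap.adjoint j0
      (α.foldl (fun x l => ContinuousLinearMap.adjoint (V l) x) (i0 u)) := by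
  rw [← adjoint_Vword_apply, Kker, ContinuousLinearMap.adjoint_comp]
  rfl

/-- If `U₀` is wandering for `V`, then the coefficients
`K(α, 0) = j₀* V_α* i₀` of the transfer function are given by the system operators
`A_k = V_k*|_H`, `B_k = V_k* ∘ i₀`, `C = j₀*|_H`, `D = j₀* ∘ i₀`:
`K(0,0) = D`, `K(α,0) = C B_{α₁}` if `|α| = 1`, and
`K(α,0) = C A_{α_r} ⋯ A_{α₂} B_{α₁}` if `α = α₁…α_r`, `r ≥ 2`.
(The first two conjuncts justify the well-definedness: `B_k` maps `U` into `H` and `H`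
is invariant under each `V_k*`; the chains of `A`'s are expressed as folds of `V_k*`.) -/
theorem transfer_coefficients
    (V : Fin d → hH →L[ℂ] hH)
    (hVi : ∀ (k : Fin d) (x : hH), ‖V k x‖ = ‖x‖)
    (hVo : ∀ k l : Fin d, k ≠ l → ∀ x y : hH, ⟪V k x, V l y⟫ = 0)
    (i0 : U →L[ℂ] hH) (hi0 : ∀ u : U, ‖i0 u‖ = ‖u‖)
    (j0 : Y →L[ℂ] hH) (hj0 : ∀ y : Y, ‖j0 y‖ = ‖y‖)
    (hw : ∀ α β : List (Fin d), α ≠ β →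
      ∀ u u' : U, ⟪Vword V α (i0 u), Vword V β (i0 u')⟫ = 0) :
    (∀ (k : Fin d) (u : U),
      ContinuousLinearMap.adjoint (V k) (i0 u) ∈ (Uplus V i0)ᗮ) ∧
    (∀ (k : Fin d), ∀ h ∈ (Uplus V i0)ᗮ,
      ContinuousLinearMap.adjoint (V k) h ∈ (Uplus V i0)ᗮ) ∧
    (∀ u : U, Kker V i0 j0 [] [] u =
      ContinuousLinearMap.adjoint j0 (i0 u)) ∧
    (∀ (k : Fin d) (u : U), Kker V i0 j0 [k] [] u =
      ContinuousLinearMap.adjoint j0 (ContinuousLinearMap.adjoint (V k) (i0 u))) ∧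
    (∀ (k : Fin d) (rest : List (Fin d)), rest ≠ [] → ∀ u : U,
      Kker V i0 j0 (k :: rest) [] u =
        ContinuousLinearMap.adjoint j0
          (rest.foldl (fun x l => ContinuousLinearMap.adjoint (V l) x)
            (ContinuousLinearMap.adjoint (V k) (i0 u)))) := by
  refine ⟨fun k u => ?_, fun k h hh => ?_, fun u => Kker_nil_apply V i0 j0 [] u,
    fun k u => Kker_nil_apply V i0 j0 [k] u,
    fun k rest _ u => Kker_nil_apply V i0 j0 (k :: rest) u⟩
  · rw [mem_orthogonal_Uplus_iff]
    intro α u'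
    rw [ContinuousLinearMap.adjoint_inner_right]
    exact hw (k :: α) [] (List.cons_ne_nil k α) u' u
  · rw [mem_orthogonal_Uplus_iff] at hh ⊢
    intro α u
    rw [ContinuousLinearMap.adjoint_inner_right]
    exact hh (k :: α) u
end
end

section
/- Let Σ : H × U → H × Y be a coisometry (ΣΣ* = I). On hH := H × ℓ²(ℕ, U) let i_0 : U → hH embed U as the index-0 summand of ℓ²(ℕ, U); write Σ*(h, y) = (a(h,y), b(h,y)) ∈ H × U; define V : hH → hH by V(h, (u_n)_{n≥0}) := (a(h,0), (b(h,0), u_0, u_1, …)) and j_0 : Y → hH by j_0(y) := (a(0,y), (b(0,y), 0, 0, …)). Then: V is an isometry; j_0 is an isometry; U_0 := i_0(U) is wandering for V with closed span of {V^n(U_0) : n ≥ 0} equal to {0} × ℓ²(ℕ, U), so H' := hH ⊖ U_+ = H × {0}; Y_0 := j_0(Y) ⊆ H' ⊕ U_0 and Y_0 is wandering for V; and the system matrix of the pair equals Σ, i.e. A := V*|_{H'} (identified with an operator on H), B := V* ∘ i_0, C := j_0*|_{H'} and D := j_0* ∘ i_0 coincide with the four blocks of Σ (Σ(h, u) = (A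 h + B u, C h + D u) under the identifications). -/
/-!
The argument rests on two identities. Since `ΣΣ* = I`, the adjoint `Σ*` preserves inner products
(`sysSt_inner`), and prepending an entry splits the `ℓ²` inner product as
`⟪x :: f, y :: g⟫ = ⟪x, y⟫ + ⟪f, g⟫` (`lpCons_inner`). Hence `V x = (a, b :: f)` with
`(a, b) = Σ*(h, 0)` satisfies `⟪V x, V x'⟫ = ⟪h, h'⟫ + ⟪f, f'⟫ = ⟪x, x'⟫`, and similarly for `j₀`.

On `{0} × ℓ²(ℕ, U)` the map `V` is the unilateral shift, so `Vⁿ (i₀ u)` is `u` placed at index `n`.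
This shows that `U₀` is wandering, and that the closed span of its translates is all of
`{0} × ℓ²(ℕ, U)`, because every `f` in `ℓ²` is the sum of its single-entry components.

`Y₀` is wandering because the whole range of `V` is orthogonal to it:
`⟪V x, j₀ y⟫ = ⟪Σ*(h, 0), Σ*(0, y)⟫ = ⟪(h, 0), (0, y)⟫ = 0`. The four block identities are the
adjoint relation `⟪Σ*(h, y), (h', u')⟫ = ⟪(h, y), Σ (h', u')⟫` evaluated on coordinate vectors.
-/

open scoped ENNReal ComplexInnerProductSpace
open ContinuousLinearMap

noncomputable section

variable {H U Y : Type*}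
  [NormedAddCommGroup H] [InnerProductSpace ℂ H] [CompleteSpace H]
  [NormedAddCommGroup U] [InnerProductSpace ℂ U] [CompleteSpace U]
  [NormedAddCommGroup Y] [InnerProductSpace ℂ Y] [CompleteSpace Y]

/-- Prepend an element to a square-summable sequence. -/
def lpCons {E : Type*} [NormedAddCommGroup E] (x : E) (f : lp (fun _ : ℕ => E) 2) :
    lp (fun _ : ℕ => E) 2 :=
  ⟨fun n => Nat.casesOn n x fun m => (f : ∀ _ : ℕ, E) m, by
    apply memℓp_gen
    have hs : Summable fun n : ℕ => ‖(f : ∀ _ : ℕ, E) n‖ ^ (2 : ℝ≥0∞).toReal :=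
      (lp.memℓp f).summable (by norm_num)
    have h1 : Summable fun n : ℕ =>
        ‖(fun n : ℕ => (Nat.casesOn n x fun m => (f : ∀ _ : ℕ, E) m : E)) (n + 1)‖
          ^ (2 : ℝ≥0∞).toReal := by
      simpa using hs
    exact (summable_nat_add_iff 1).mp h1⟩

/-- The Hilbert space `hH = H ⊕₂ ℓ²(ℕ, U)`. -/
abbrev SysSpace (H U : Type*) [NormedAddCommGroup H] [NormedAddCommGroup U] :=
  WithLp 2 (H × lp (fun _ : ℕ => U) 2)

/-- `i₀ : U → hH` embeds `U` as the index-0 summand of `ℓ²(ℕ, U)`. -/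
def sysI0 (H : Type*) [NormedAddCommGroup H] [InnerProductSpace ℂ H]
    (u : U) : SysSpace H U :=
  (WithLp.equiv 2 (H × lp (fun _ : ℕ => U) 2)).symm (0, lpCons u 0)

/-- Embedding of `H` as `H × {0}` in `hH`. -/
def iotaH (h : H) : SysSpace H U :=
  (WithLp.equiv 2 (H × lp (fun _ : ℕ => U) 2)).symm (h, 0)

/-- The components `(a(h,y), b(h,y)) = Σ*(h, y) ∈ H × U`. -/
def sysSt (Sg : WithLp 2 (H × U) →L[ℂ] WithLp 2 (H × Y)) (h : H) (y : Y) : H × U :=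
  (WithLp.equiv 2 (H × U))
    (ContinuousLinearMap.adjoint Sg ((WithLp.equiv 2 (H × Y)).symm (h, y)))

/-- `V(h, (u_n)) = (a(h,0), (b(h,0), u₀, u₁, …))`. -/
def sysV (Sg : WithLp 2 (H × U) →L[ℂ] WithLp 2 (H × Y)) :
    SysSpace H U → SysSpace H U := fun x =>
  (WithLp.equiv 2 (H × lp (fun _ : ℕ => U) 2)).symm
    ((sysSt Sg ((WithLp.equiv 2 (H × lp (fun _ : ℕ => U) 2)) x).1 0).1,
      lpCons (sysSt Sg ((WithLp.equiv 2 (H × lp (fun _ : ℕ => U) 2)) x).1 0).2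
        ((WithLp.equiv 2 (H × lp (fun _ : ℕ => U) 2)) x).2)

/-- `j₀(y) = (a(0,y), (b(0,y), 0, 0, …))`. -/
def sysJ0 (Sg : WithLp 2 (H × U) →L[ℂ] WithLp 2 (H × Y)) (y : Y) : SysSpace H U :=
  (WithLp.equiv 2 (H × lp (fun _ : ℕ => U) 2)).symm
    ((sysSt Sg 0 y).1, lpCons (sysSt Sg 0 y).2 0)

/-- `U₊ = closed span of the V^n(U₀)`. -/
def sysUplus (Sg : WithLp 2 (H × U) →L[ℂ] WithLp 2 (H × Y)) : Submodule ℂ (SysSpace H U) :=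
  (Submodule.span ℂ
    (⋃ n : ℕ, Set.range fun u : U => (sysV Sg)^[n] (sysI0 H u))).topologicalClosure

/-- The four blocks of `Σ`: `Σ(h, u) = (A h + B u, C h + D u)`. -/
def blkA (Sg : WithLp 2 (H × U) →L[ℂ] WithLp 2 (H × Y)) (h : H) : H :=
  ((WithLp.equiv 2 (H × Y)) (Sg ((WithLp.equiv 2 (H × U)).symm (h, 0)))).1

def blkB (Sg : WithLp 2 (H × U) →L[ℂ] WithLp 2 (H × Y)) (u : U) : H :=
  ((WithLp.equiv 2 (H × Y)) (Sg ((WithLp.equiv 2 (H × U)).symm (0, u)))).1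

def blkC (Sg : WithLp 2 (H × U) →L[ℂ] WithLp 2 (H × Y)) (h : H) : Y :=
  ((WithLp.equiv 2 (H × Y)) (Sg ((WithLp.equiv 2 (H × U)).symm (h, 0)))).2

def blkD (Sg : WithLp 2 (H × U) →L[ℂ] WithLp 2 (H × Y)) (u : U) : Y :=
  ((WithLp.equiv 2 (H × Y)) (Sg ((WithLp.equiv 2 (H × U)).symm (0, u)))).2

@[simp] theorem lpCons_zero_apply {E : Type*} [NormedAddCommGroup E] (x : E)
    (f : lp (fun _ : ℕ => E) 2) : lpCons x f 0 = x := rfl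

@[simp] theorem lpCons_succ_apply {E : Type*} [NormedAddCommGroup E] (x : E)
    (f : lp (fun _ : ℕ => E) 2) (n : ℕ) : lpCons x f (n + 1) = f n := rfl

theorem lpCons_add {E : Type*} [NormedAddCommGroup E] (x y : E)
    (f g : lp (fun _ : ℕ => E) 2) : lpCons (x + y) (f + g) = lpCons x f + lpCons y g := by
  ext n
  cases n <;> simp

theorem lpCons_smul {E : Type*} [NormedAddCommGroup E] [InnerProductSpace ℂ E] (c : ℂ) (x : E)
    (f : lp (fun _ : ℕ => E) 2) :
    lpCons (c • x) (c • f) = c • lpCons x f := by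
  ext n
  cases n <;> simp

theorem lpCons_inner {E : Type*} [NormedAddCommGroup E] [InnerProductSpace ℂ E] (x y : E)
    (f g : lp (fun _ : ℕ => E) 2) :
    ⟪lpCons x f, lpCons y g⟫ = ⟪x, y⟫ + ⟪f, g⟫ := by
  rw [lp.inner_eq_tsum, lp.inner_eq_tsum,
    (lp.summable_inner (𝕜 := ℂ) (lpCons x f) (lpCons y g)).tsum_eq_zero_add]
  simp

theorem lpCons_zero_right {E : Type*} [NormedAddCommGroup E] (u : E) :
    lpCons u 0 = lp.single 2 0 u := by
  ext n
  cases n <;> simp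

theorem lpCons_single {E : Type*} [NormedAddCommGroup E] (u : E) (n : ℕ) :
    lpCons 0 (lp.single 2 n u) = (lp.single 2 (n + 1) u : lp (fun _ : ℕ => E) 2) := by
  ext m
  cases m with
  | zero => simp
  | succ m => simp [Pi.single_apply]

theorem sysSt_add (Sg : WithLp 2 (H × U) →L[ℂ] WithLp 2 (H × Y)) (h h' : H) (y y' : Y) :
    sysSt Sg (h + h') (y + y') = sysSt Sg h y + sysSt Sg h' y' := by
  have : WithLp.toLp 2 (h + h', y + y') = WithLp.toLp 2 (h, y) + WithLp.toLp 2 (h', y') := rfl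
  simp [sysSt, this]

theorem sysSt_smul (Sg : WithLp 2 (H × U) →L[ℂ] WithLp 2 (H × Y)) (c : ℂ) (h : H) (y : Y) :
    sysSt Sg (c • h) (c • y) = c • sysSt Sg h y := by
  have : WithLp.toLp 2 (c • h, c • y) = c • WithLp.toLp 2 (h, y) := rfl
  simp [sysSt, this]

/-- `ΣΣ* = I` says that `Σ*` preserves inner products; this is the componentwise form. -/
theorem sysSt_inner (Sg : WithLp 2 (H × U) →L[ℂ] WithLp 2 (H × Y))
    (hco : Sg ∘L ContinuousLinearMap.adjoint Sg = 1) (h h' : H) (y y' : Y) :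
    ⟪(sysSt Sg h y).1, (sysSt Sg h' y').1⟫ + ⟪(sysSt Sg h y).2, (sysSt Sg h' y').2⟫
      = ⟪h, h'⟫ + ⟪y, y'⟫ := by
  have key : ⟪ContinuousLinearMap.adjoint Sg (WithLp.toLp 2 (h, y)),
      ContinuousLinearMap.adjoint Sg (WithLp.toLp 2 (h', y'))⟫
      = ⟪WithLp.toLp 2 (h, y), WithLp.toLp 2 (h', y')⟫ := by
    rw [ContinuousLinearMap.adjoint_inner_left]
    exact congrArg _ (DFunLike.congr_fun hco _)
  simpa [sysSt, WithLp.prod_inner_apply] using key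

/-- The adjoint relation `⟪Σ*(h, y), (h', u')⟫ = ⟪(h, y), Σ (h', u')⟫`, written componentwise. -/
theorem sysSt_inner_adjoint (Sg : WithLp 2 (H × U) →L[ℂ] WithLp 2 (H × Y))
    (h h' : H) (y : Y) (u' : U) :
    ⟪(sysSt Sg h y).1, h'⟫ + ⟪(sysSt Sg h y).2, u'⟫
      = ⟪h, (Sg (WithLp.toLp 2 (h', u'))).fst⟫ + ⟪y, (Sg (WithLp.toLp 2 (h', u'))).snd⟫ := by
  have key := ContinuousLinearMap.adjoint_inner_left Sg
    (WithLp.toLp 2 (h', u')) (WithLp.toLp 2 (h, y))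
  simpa [sysSt, WithLp.prod_inner_apply] using key

theorem sysV_add (Sg : WithLp 2 (H × U) →L[ℂ] WithLp 2 (H × Y)) (x y : SysSpace H U) :
    sysV Sg (x + y) = sysV Sg x + sysV Sg y := by
  have h := sysSt_add Sg x.fst y.fst 0 0
  rw [add_zero] at h
  apply (WithLp.equiv 2 _).injective
  ext1 <;> simp [sysV, h, lpCons_add]

theorem sysV_smul (Sg : WithLp 2 (H × U) →L[ℂ] WithLp 2 (H × Y)) (c : ℂ) (x : SysSpace H U) :
    sysV Sg (c • x) = c • sysV Sg x := by
  have h := sysSt_smul Sg c x.fst 0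
  rw [smul_zero] at h
  apply (WithLp.equiv 2 _).injective
  ext1 <;> simp [sysV, h, lpCons_smul]

theorem sysJ0_add (Sg : WithLp 2 (H × U) →L[ℂ] WithLp 2 (H × Y)) (y y' : Y) :
    sysJ0 Sg (y + y') = sysJ0 Sg y + sysJ0 Sg y' := by
  have h := sysSt_add Sg 0 0 y y'
  have h2 := lpCons_add (sysSt Sg 0 y).2 (sysSt Sg 0 y').2 0 0
  rw [add_zero] at h h2
  apply (WithLp.equiv 2 _).injective
  ext1 <;> simp [sysJ0, h, h2]

theorem sysJ0_smul (Sg : WithLp 2 (H × U) →L[ℂ] WithLp 2 (H × Y)) (c : ℂ) (y : Y) :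
    sysJ0 Sg (c • y) = c • sysJ0 Sg y := by
  have h := sysSt_smul Sg c 0 y
  have h2 := lpCons_smul c (sysSt Sg 0 y).2 0
  rw [smul_zero] at h h2
  apply (WithLp.equiv 2 _).injective
  ext1 <;> simp [sysJ0, h, h2]

theorem sysV_inner (Sg : WithLp 2 (H × U) →L[ℂ] WithLp 2 (H × Y))
    (hco : Sg ∘L ContinuousLinearMap.adjoint Sg = 1) (x y : SysSpace H U) :
    ⟪sysV Sg x, sysV Sg y⟫ = ⟪x, y⟫ := by
  have h := sysSt_inner Sg hco x.fst y.fst 0 0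
  rw [inner_zero_left, add_zero] at h
  simp only [WithLp.prod_inner_apply, sysV, WithLp.equiv_symm_apply, WithLp.equiv_apply,
    lpCons_inner, ← add_assoc]
  exact congrArg (· + _) h

theorem sysJ0_inner (Sg : WithLp 2 (H × U) →L[ℂ] WithLp 2 (H × Y))
    (hco : Sg ∘L ContinuousLinearMap.adjoint Sg = 1) (y y' : Y) :
    ⟪sysJ0 Sg y, sysJ0 Sg y'⟫ = ⟪y, y'⟫ := by
  have h := sysSt_inner Sg hco 0 0 y y'
  rw [inner_zero_left, zero_add] at h
  simpa [WithLp.prod_inner_apply, sysJ0, lpCons_inner] using h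

/-- The range of `V` is orthogonal to `Y₀`. -/
theorem sysV_inner_sysJ0 (Sg : WithLp 2 (H × U) →L[ℂ] WithLp 2 (H × Y))
    (hco : Sg ∘L ContinuousLinearMap.adjoint Sg = 1) (x : SysSpace H U) (y : Y) :
    ⟪sysV Sg x, sysJ0 Sg y⟫ = 0 := by
  have h := sysSt_inner Sg hco x.fst 0 0 y
  rw [inner_zero_left, inner_zero_right, add_zero] at h
  simpa [WithLp.prod_inner_apply, sysV, sysJ0, lpCons_inner] using h

/-- For an inner-product preserving `V`, orthogonality of the translates of a family `f` only has
to be tested between `f` and its strictly positive translates. -/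
theorem wandering_of_succ {E X : Type*} [NormedAddCommGroup E] [InnerProductSpace ℂ E]
    (V : E → E) (hV : ∀ x y, ⟪V x, V y⟫ = ⟪x, y⟫) (f : X → E)
    (hf : ∀ n a b, ⟪V^[n + 1] (f a), f b⟫ = 0) :
    ∀ n m : ℕ, n ≠ m → ∀ a b, ⟪V^[n] (f a), V^[m] (f b)⟫ = 0 := by
  have shift (k : ℕ) (x y : E) : ⟪V^[k] x, V^[k] y⟫ = ⟪x, y⟫ := by
    induction k with
    | zero => rfl
    | succ k ih => rw [Function.iterate_succ_apply', Function.iterate_succ_apply', hV, ih]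
  have main (k d : ℕ) (a b : X) : ⟪V^[k + (d + 1)] (f a), V^[k] (f b)⟫ = 0 := by
    rw [Function.iterate_add_apply, shift, hf]
  intro n m hnm a b
  rcases lt_or_gt_of_ne hnm with h | h
  · obtain ⟨d, rfl⟩ := Nat.exists_eq_add_of_lt h
    exact inner_eq_zero_symm.mp (main n d b a)
  · obtain ⟨d, rfl⟩ := Nat.exists_eq_add_of_lt h
    exact main m d a b

/-- On `{0} × ℓ²(ℕ, U)` the map `V` is the shift, so `Vⁿ (i₀ u)` is `u` at index `n`. -/
theorem sysV_iterate_sysI0 (Sg : WithLp 2 (H × U) →L[ℂ] WithLp 2 (H × Y)) (n : ℕ) (u : U) :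
    (sysV Sg)^[n] (sysI0 H u) = WithLp.toLp 2 ((0 : H), lp.single 2 n u) := by
  induction n with
  | zero => simp [sysI0, lpCons_zero_right]
  | succ n ih =>
    have h0 : sysSt Sg 0 0 = 0 := by simpa using sysSt_smul Sg 0 0 0
    rw [Function.iterate_succ_apply', ih]
    simp [sysV, h0, lpCons_single]

theorem mem_sysUplus (Sg : WithLp 2 (H × U) →L[ℂ] WithLp 2 (H × Y)) (x : SysSpace H U) :
    x ∈ sysUplus Sg ↔ x.fst = 0 := by
  constructor
  · let F := WithLp.fstL 2 ℂ H (lp (fun _ : ℕ => U) 2)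
    have hle : sysUplus Sg ≤ F.ker := by
      refine Submodule.topologicalClosure_minimal _ (Submodule.span_le.mpr ?_) F.isClosed_ker
      refine Set.iUnion_subset fun n => ?_
      rintro _ ⟨u, rfl⟩
      change ((sysV Sg)^[n] (sysI0 H u)).fst = 0
      rw [sysV_iterate_sysI0]
      rfl
    exact fun hx => hle hx
  · intro hx
    let J := (WithLp.prodContinuousLinearEquiv 2 ℂ H
      (lp (fun _ : ℕ => U) 2)).symm.toContinuousLinearMap ∘L
        ContinuousLinearMap.inr ℂ H (lp (fun _ : ℕ => U) 2)
    have hJ : J x.snd = x := by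
      apply (WithLp.equiv 2 _).injective
      exact Prod.ext hx.symm rfl
    have hsum := (lp.hasSum_single (by norm_num) x.snd).mapL J
    rw [hJ] at hsum
    refine (Submodule.isClosed_topologicalClosure _).mem_of_tendsto hsum
      (Filter.Eventually.of_forall fun s => Submodule.sum_mem _ fun n _ => ?_)
    refine Submodule.le_topologicalClosure _ (Submodule.subset_span ?_)
    exact Set.mem_iUnion.mpr ⟨n, x.snd n, sysV_iterate_sysI0 Sg n _⟩

theorem mem_sysUplus_orthogonal (Sg : WithLp 2 (H × U) →L[ℂ] WithLp 2 (H × Y))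
    (x : SysSpace H U) : x ∈ (sysUplus Sg)ᗮ ↔ x.snd = 0 := by
  rw [Submodule.mem_orthogonal]
  constructor
  · intro hx
    have h := hx (WithLp.toLp 2 (0, x.snd)) ((mem_sysUplus Sg _).mpr rfl)
    simpa [WithLp.prod_inner_apply] using h
  · intro hx z hz
    rw [mem_sysUplus] at hz
    simp [WithLp.prod_inner_apply, hx, hz]

/-- For a coisometry `Σ : H ⊕₂ U → H ⊕₂ Y` (`ΣΣ* = I`), the concrete
model `hH = H ⊕₂ ℓ²(ℕ, U)`, `V(h, (u_n)) = (a(h,0), (b(h,0), u₀, u₁, …))`,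
`j₀(y) = (a(0,y), (b(0,y), 0, …))` with `(a, b) = Σ*`, and `i₀` the index-0 embedding
yields: `V` is a (linear) isometry; `j₀` is a (linear) isometry; `U₀ = i₀(U)` is
wandering with `U₊ = {0} × ℓ²(ℕ, U)`, so `H' = hH ⊖ U₊ = H × {0}`; `Y₀ = j₀(Y)` is
wandering and `Y₀ ⊆ H' ⊕ U₀`; and the system matrix `(A B; C D)` of the pair
(`A = V*|_{H'}`, `B = V* ∘ i₀`, `C = j₀*|_{H'}`, `D = j₀* ∘ i₀`, under the
identifications `H' ≅ H`, `U₀ ≅ U`) coincides with the blocks of `Σ`. -/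
theorem coisometry_model
    (Sg : WithLp 2 (H × U) →L[ℂ] WithLp 2 (H × Y))
    (hco : Sg ∘L ContinuousLinearMap.adjoint Sg = 1) :
    -- V is a linear isometry
    (∀ x y : SysSpace H U, sysV Sg (x + y) = sysV Sg x + sysV Sg y) ∧
    (∀ (c : ℂ) (x : SysSpace H U), sysV Sg (c • x) = c • sysV Sg x) ∧
    Isometry (sysV Sg) ∧
    -- j₀ is a linear isometry
    (∀ y y' : Y, sysJ0 Sg (y + y') = sysJ0 Sg y + sysJ0 Sg y') ∧
    (∀ (c : ℂ) (y : Y), sysJ0 Sg (c • y) = c • sysJ0 Sg y) ∧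
    Isometry (sysJ0 Sg) ∧
    -- U₀ is wandering for V
    (∀ n m : ℕ, n ≠ m → ∀ u u' : U,
      ⟪(sysV Sg)^[n] (sysI0 H u), (sysV Sg)^[m] (sysI0 H u')⟫ = 0) ∧
    -- U₊ = {0} × ℓ²(ℕ, U)
    (∀ x : SysSpace H U, x ∈ sysUplus Sg ↔
      ((WithLp.equiv 2 (H × lp (fun _ : ℕ => U) 2)) x).1 = 0) ∧
    -- H' = hH ⊖ U₊ = H × {0}
    (∀ x : SysSpace H U, x ∈ (sysUplus Sg)ᗮ ↔
      ((WithLp.equiv 2 (H × lp (fun _ : ℕ => U) 2)) x).2 = 0) ∧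
    -- Y₀ ⊆ H' ⊕ U₀
    (∀ y : Y, ∃ (h : H) (u : U), sysJ0 Sg y = iotaH h + sysI0 H u) ∧
    -- Y₀ is wandering for V
    (∀ n m : ℕ, n ≠ m → ∀ y y' : Y,
      ⟪(sysV Sg)^[n] (sysJ0 Sg y), (sysV Sg)^[m] (sysJ0 Sg y')⟫ = 0) ∧
    -- A = V*|_{H'} coincides with the A-block of Σ : V*(ι h) = ι(A h)
    (∀ (h : H) (x : SysSpace H U), ⟪sysV Sg x, iotaH h⟫ = ⟪x, iotaH (blkA Sg h)⟫) ∧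
    -- B = V* ∘ i₀ coincides with the B-block of Σ : V*(i₀ u) = ι(B u)
    (∀ (u : U) (x : SysSpace H U), ⟪sysV Sg x, sysI0 H u⟫ = ⟪x, iotaH (blkB Sg u)⟫) ∧
    -- C = j₀*|_{H'} coincides with the C-block of Σ : j₀*(ι h) = C h
    (∀ (h : H) (y : Y), ⟪iotaH h, sysJ0 Sg y⟫ = ⟪blkC Sg h, y⟫) ∧
    -- D = j₀* ∘ i₀ coincides with the D-block of Σ : j₀*(i₀ u) = D u
    (∀ (u : U) (y : Y), ⟪sysI0 H u, sysJ0 Sg y⟫ = ⟪blkD Sg u, y⟫) := by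
  refine ⟨sysV_add Sg, sysV_smul Sg, ?_, sysJ0_add Sg, sysJ0_smul Sg, ?_, ?_,
    mem_sysUplus Sg, mem_sysUplus_orthogonal Sg, ?_, ?_, ?_, ?_, ?_, ?_⟩
  · exact (LinearMap.isometryOfInner
      { toFun := sysV Sg, map_add' := sysV_add Sg, map_smul' := sysV_smul Sg }
      (sysV_inner Sg hco)).isometry
  · exact (LinearMap.isometryOfInner
      { toFun := sysJ0 Sg, map_add' := sysJ0_add Sg, map_smul' := sysJ0_smul Sg }
      (sysJ0_inner Sg hco)).isometry
  · refine wandering_of_succ _ (sysV_inner Sg hco) _ fun n u u' => ?_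
    rw [sysV_iterate_sysI0]
    simp [WithLp.prod_inner_apply, sysI0, lp.inner_single_left]
  · intro y
    refine ⟨(sysSt Sg 0 y).1, (sysSt Sg 0 y).2, ?_⟩
    apply (WithLp.equiv 2 _).injective
    ext1 <;> simp [sysJ0, iotaH, sysI0]
  · refine wandering_of_succ _ (sysV_inner Sg hco) _ fun n y y' => ?_
    rw [Function.iterate_succ_apply', sysV_inner_sysJ0 Sg hco]
  · intro h x
    have key := sysSt_inner_adjoint Sg x.fst h 0 0
    simpa [WithLp.prod_inner_apply, sysV, iotaH, blkA] using key
  · intro u x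
    have key := sysSt_inner_adjoint Sg x.fst 0 0 u
    simpa [WithLp.prod_inner_apply, sysV, iotaH, sysI0, lpCons_inner, blkB] using key
  · intro h y
    have key := congrArg (starRingEnd ℂ) (sysSt_inner_adjoint Sg 0 h y 0)
    simpa [WithLp.prod_inner_apply, sysJ0, iotaH, blkC] using key
  · intro u y
    have key := congrArg (starRingEnd ℂ) (sysSt_inner_adjoint Sg 0 0 y u)
    simpa [WithLp.prod_inner_apply, sysJ0, sysI0, lpCons_inner, blkD] using key
end
end

section
/- The block operator Σ : H × H → H × H defined by Σ(h, u) := (T* h + D_T u, D_{T*} h − T u) is unitary, i.e. Σ*Σ = I and ΣΣ* = I. -/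
/-! Writing `A = D_{T*}`, `B = D_T`, the adjoint of `Σ` is the block operator of the same shape
built from `T*`, with the two defect operators exchanged. Multiplying out, `Σ*Σ = I` and
`ΣΣ* = I` reduce to `B² + T*T = I`, `A² + TT* = I` and the intertwining relations `A T = T B`,
`T* A = B T*`.

The relation `A T = T B` follows from `A² T = T B²` without approximating square roots by
polynomials. The operator `X = A T - T B` solves the homogeneous Sylvester equation
`A X + X B = 0`. Hence `X*X B = -X*A X` is self-adjoint, so the positive operators `X*X` and `B`
commute and `X*X B` is both `≥ 0` and `≤ 0`. This gives `X B = 0` and `A X = 0`, from which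
`(X X*)² = X X* A T X* - X X* T B X* = 0`, and the C⋆-identity yields `X = 0`. -/

open ContinuousLinearMap

noncomputable section

variable {H : Type*} [NormedAddCommGroup H] [InnerProductSpace ℂ H] [CompleteSpace H]

/-- The block operator `Σ : H ⊕₂ H → H ⊕₂ H`, `(h, u) ↦ (T* h + D_T u, D_{T*} h − T u)`,
on the Hilbert-space (ℓ²) product `WithLp 2 (H × H)`. -/
def blockSigma (T DT DTs : H →L[ℂ] H) : WithLp 2 (H × H) →L[ℂ] WithLp 2 (H × H) :=
  ((WithLp.prodContinuousLinearEquiv 2 ℂ H H).symm : (H × H) →L[ℂ] WithLp 2 (H × H)) ∘L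
    ((ContinuousLinearMap.adjoint T ∘L ContinuousLinearMap.fst ℂ H H
        + DT ∘L ContinuousLinearMap.snd ℂ H H).prod
      (DTs ∘L ContinuousLinearMap.fst ℂ H H - T ∘L ContinuousLinearMap.snd ℂ H H)) ∘L
    ((WithLp.prodContinuousLinearEquiv 2 ℂ H H) : WithLp 2 (H × H) →L[ℂ] H × H)

/-- Square roots intertwine whatever their squares intertwine: if `a, b ≥ 0` and
`a² t = t b²`, then `a t = t b`. -/
theorem intertwine_of_sq {R : Type*} [CStarAlgebra R] [PartialOrder R] [StarOrderedRing R]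
    {a b t : R} (ha : 0 ≤ a) (hb : 0 ≤ b) (h : a * a * t = t * (b * b)) :
    a * t = t * b := by
  have sa : star a = a := (IsSelfAdjoint.of_nonneg ha).star_eq
  have sb : star b = b := (IsSelfAdjoint.of_nonneg hb).star_eq
  obtain ⟨x, hx⟩ : ∃ x, x = a * t - t * b := ⟨_, rfl⟩
  have h1 : a * x + x * b = 0 := by
    have : a * x + x * b = a * a * t - t * (b * b) := by rw [hx]; noncomm_ring
    rw [this, h, sub_self]
  have h1' : x * b = -(a * x) := eq_neg_of_add_eq_zero_right h1
  have h2 : star x * x * b = -(star x * a * x) := by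
    rw [mul_assoc, h1', mul_neg, mul_assoc]
  have hcomm : Commute (star x * x) b := by
    have h3 := congrArg star h2
    simp only [star_mul, star_neg, star_star, sa, sb] at h3
    change star x * x * b = b * (star x * x)
    rw [h2, h3, mul_assoc]
  have hpos : 0 ≤ star x * x * b := hcomm.mul_nonneg (star_mul_self_nonneg x) hb
  have hneg : star x * x * b ≤ 0 := by
    rw [h2]
    exact neg_nonpos.mpr (star_left_conjugate_nonneg ha x)
  have h0 : star x * x * b = 0 := le_antisymm hneg hpos
  have hxb : x * b = 0 := by
    rw [← CStarRing.star_mul_self_eq_zero_iff]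
    calc star (x * b) * (x * b) = star b * (star x * x * b) := by
          simp only [star_mul, mul_assoc]
      _ = 0 := by rw [h0, mul_zero]
  have hax : a * x = 0 := by rw [hxb, add_zero] at h1; exact h1
  have hbx : b * star x = 0 := by
    have := congrArg star hxb
    simpa [sb] using this
  have hxa : star x * a = 0 := by
    have := congrArg star hax
    simpa [sa] using this
  have hsq : star (x * star x) * (x * star x) = 0 := by
    calc star (x * star x) * (x * star x) = x * star x * (x * star x) := by
          simp only [star_mul, star_star]
      _ = x * star x * ((a * t - t * b) * star x) := by rw [← hx]
      _ = x * (star x * a) * t * star x - x * star x * t * (b * star x) := by noncomm_ring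
      _ = 0 := by rw [hxa, hbx]; simp
  have hx0 : x = 0 := by
    rwa [CStarRing.star_mul_self_eq_zero_iff, CStarRing.mul_star_self_eq_zero_iff] at hsq
  rw [hx] at hx0
  exact sub_eq_zero.mp hx0

theorem blockSigma_fst (T DT DTs : H →L[ℂ] H) (x : WithLp 2 (H × H)) :
    (blockSigma T DT DTs x).fst = ContinuousLinearMap.adjoint T x.fst + DT x.snd := rfl

theorem blockSigma_snd (T DT DTs : H →L[ℂ] H) (x : WithLp 2 (H × H)) :
    (blockSigma T DT DTs x).snd = DTs x.fst - T x.snd := rfl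

theorem adjoint_blockSigma (T DT DTs : H →L[ℂ] H) (hDT : IsSelfAdjoint DT)
    (hDTs : IsSelfAdjoint DTs) :
    ContinuousLinearMap.adjoint (blockSigma T DT DTs)
      = blockSigma (ContinuousLinearMap.adjoint T) DTs DT := by
  symm
  rw [ContinuousLinearMap.eq_adjoint_iff]
  intro x y
  have e1 : ∀ u v : H, inner ℂ (DT u) v = inner ℂ u (DT v) := hDT.isSymmetric
  have e2 : ∀ u v : H, inner ℂ (DTs u) v = inner ℂ u (DTs v) := hDTs.isSymmetric
  simp only [WithLp.prod_inner_apply]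
  change inner ℂ (blockSigma _ _ _ x).fst y.fst + inner ℂ (blockSigma _ _ _ x).snd y.snd
    = inner ℂ x.fst (blockSigma _ _ _ y).fst + inner ℂ x.snd (blockSigma _ _ _ y).snd
  simp only [blockSigma_fst, blockSigma_snd, inner_add_left, inner_add_right, inner_sub_left,
    inner_sub_right, ContinuousLinearMap.adjoint_adjoint, ContinuousLinearMap.adjoint_inner_left,
    ContinuousLinearMap.adjoint_inner_right, e1, e2]
  ring

/-- The multiplied-out form of `ΣΣ* = I`; with `T*` in place of `T` and the defect operators
exchanged it also gives `Σ*Σ = I`. -/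
theorem blockSigma_comp (T DT DTs : H →L[ℂ] H)
    (hDT : DT ∘L DT = 1 - ContinuousLinearMap.adjoint T ∘L T)
    (hDTs : DTs ∘L DTs = 1 - T ∘L ContinuousLinearMap.adjoint T)
    (h1 : DTs * T = T * DT)
    (h2 : ContinuousLinearMap.adjoint T * DTs = DT * ContinuousLinearMap.adjoint T) :
    blockSigma T DT DTs ∘L blockSigma (ContinuousLinearMap.adjoint T) DTs DT = 1 := by
  have k1 : ∀ v, DT (DT v) = v - ContinuousLinearMap.adjoint T (T v) :=
    fun v => congrArg (fun f : H →L[ℂ] H => f v) hDT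
  have k2 : ∀ v, DTs (DTs v) = v - T (ContinuousLinearMap.adjoint T v) :=
    fun v => congrArg (fun f : H →L[ℂ] H => f v) hDTs
  have k3 : ∀ v, DTs (T v) = T (DT v) := fun v => congrArg (fun f : H →L[ℂ] H => f v) h1
  have k4 : ∀ v, ContinuousLinearMap.adjoint T (DTs v) = DT (ContinuousLinearMap.adjoint T v) :=
    fun v => congrArg (fun f : H →L[ℂ] H => f v) h2
  refine ContinuousLinearMap.ext fun x => ?_
  apply (WithLp.prodContinuousLinearEquiv 2 ℂ H H).injective
  refine Prod.ext ?_ ?_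
  · change (blockSigma _ _ _ (blockSigma _ _ _ x)).fst = x.fst
    simp only [blockSigma_fst, blockSigma_snd, ContinuousLinearMap.adjoint_adjoint, map_add,
      map_sub, k1, k4]
    abel
  · change (blockSigma _ _ _ (blockSigma _ _ _ x)).snd = x.snd
    simp only [blockSigma_fst, blockSigma_snd, ContinuousLinearMap.adjoint_adjoint, map_add,
      map_sub, k2, k3]
    abel

/-- For a contraction `T` with defect operators `D_T = √(I − T*T)` and
`D_{T*} = √(I − TT*)`, the block operator `Σ(h, u) = (T* h + D_T u, D_{T*} h − T u)` is
unitary: `Σ*Σ = I` and `ΣΣ* = I`. -/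
theorem blockSigma_unitary
    (T : H →L[ℂ] H) (hT : ‖T‖ ≤ 1)
    (DT : H →L[ℂ] H) (hDTpos : DT.IsPositive)
    (hDT : DT ∘L DT = 1 - ContinuousLinearMap.adjoint T ∘L T)
    (DTs : H →L[ℂ] H) (hDTspos : DTs.IsPositive)
    (hDTs : DTs ∘L DTs = 1 - T ∘L ContinuousLinearMap.adjoint T) :
    (∀ h u : H,
      WithLp.prodContinuousLinearEquiv 2 ℂ H H
        (blockSigma T DT DTs ((WithLp.prodContinuousLinearEquiv 2 ℂ H H).symm (h, u)))
        = (ContinuousLinearMap.adjoint T h + DT u, DTs h - T u)) ∧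
    ContinuousLinearMap.adjoint (blockSigma T DT DTs) ∘L blockSigma T DT DTs = 1 ∧
    blockSigma T DT DTs ∘L ContinuousLinearMap.adjoint (blockSigma T DT DTs) = 1 := by
  have pDT : 0 ≤ DT := (ContinuousLinearMap.nonneg_iff_isPositive DT).mpr hDTpos
  have pDTs : 0 ≤ DTs := (ContinuousLinearMap.nonneg_iff_isPositive DTs).mpr hDTspos
  have sDT : IsSelfAdjoint DT := hDTpos.isSelfAdjoint
  have sDTs : IsSelfAdjoint DTs := hDTspos.isSelfAdjoint
  have h1 : DTs * T = T * DT := by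
    refine intertwine_of_sq pDTs pDT ?_
    have e1 : DT * DT = 1 - ContinuousLinearMap.adjoint T * T := hDT
    have e2 : DTs * DTs = 1 - T * ContinuousLinearMap.adjoint T := hDTs
    rw [e1, e2]
    noncomm_ring
  have h2 : ContinuousLinearMap.adjoint T * DTs = DT * ContinuousLinearMap.adjoint T := by
    have h := congrArg star h1
    rwa [star_mul, star_mul, sDT.star_eq, sDTs.star_eq,
      ContinuousLinearMap.star_eq_adjoint] at h
  refine ⟨fun h u => rfl, ?_, ?_⟩
  · rw [adjoint_blockSigma T DT DTs sDT sDTs]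
    have := blockSigma_comp (ContinuousLinearMap.adjoint T) DTs DT
      (by rw [ContinuousLinearMap.adjoint_adjoint]; exact hDTs)
      (by rw [ContinuousLinearMap.adjoint_adjoint]; exact hDT) h2.symm
      (by rw [ContinuousLinearMap.adjoint_adjoint]; exact h1.symm)
    rwa [ContinuousLinearMap.adjoint_adjoint] at this
  · rw [adjoint_blockSigma T DT DTs sDT sDTs]
    exact blockSigma_comp T DT DTs hDT hDTs h1 h2
end
end
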